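/- Let C and D be model categories and g : C → D a functor left adjoint to f : D → C which forms a Quillen adjunction (g preserves cofibrations and trivial cofibrations). Then there exists an adjunction Lg ⊣ Rf between the homotopy categories, Lg : Ho(C) → Ho(D) and Rf : Ho(D) → Ho(C), such that Lg(l_C(X)) is isomorphic to l_D(g(X)) for every cofibrant object X of C, and Rf(l_D(Y)) is isomorphic to l_C(f(Y)) for every fibrant object Y of D. -/

import Mathlib

open CategoryTheory CategoryTheory.Limits

universe v v' u u'

/-- `f` is a retract of `g`: there are morphisms `i, r, j, s` exhibiting the arrow `f`
as a retract of the arrow `g` in the arrow category. -/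
def IsRetractOf {C : Type u} [Category.{v} C] {X Y X' Y' : C}
    (f : X ⟶ Y) (g : X' ⟶ Y') : Prop :=
  ∃ (i : X ⟶ X') (r : X' ⟶ X) (j : Y ⟶ Y') (s : Y' ⟶ Y),
    i ≫ r = 𝟙 X ∧ j ≫ s = 𝟙 Y ∧ i ≫ g = f ≫ j ∧ g ≫ s = r ≫ f

/-- A model category structure (in the sense of Quillen) on a category `C`:
weak equivalences `W`, fibrations `Fib` and cofibrations `Cof`, satisfying
two-out-of-three, stability under composition and retracts, the lifting axioms,
and the factorization axioms. (The category `C` is moreover assumed to be complete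
and cocomplete, via the `HasLimits`/`HasColimits` instances in the statements.) -/
structure ModelStructure (C : Type u) [Category.{v} C] where
  W : MorphismProperty C
  Fib : MorphismProperty C
  Cof : MorphismProperty C
  /-- two-out-of-three, part 1 -/
  W_comp : ∀ {X Y Z : C} (f : X ⟶ Y) (g : Y ⟶ Z), W f → W g → W (f ≫ g)
  /-- two-out-of-three, part 2 -/
  W_of_comp_right : ∀ {X Y Z : C} (f : X ⟶ Y) (g : Y ⟶ Z), W (f ≫ g) → W g → W f
  /-- two-out-of-three, part 3 -/
  W_of_comp_left : ∀ {X Y Z : C} (f : X ⟶ Y) (g : Y ⟶ Z), W (f ≫ g) → W f → W g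
  Fib_comp : ∀ {X Y Z : C} (f : X ⟶ Y) (g : Y ⟶ Z), Fib f → Fib g → Fib (f ≫ g)
  Cof_comp : ∀ {X Y Z : C} (f : X ⟶ Y) (g : Y ⟶ Z), Cof f → Cof g → Cof (f ≫ g)
  W_retract : ∀ {X Y X' Y' : C} (f : X ⟶ Y) (g : X' ⟶ Y'), IsRetractOf f g → W g → W f
  Fib_retract : ∀ {X Y X' Y' : C} (f : X ⟶ Y) (g : X' ⟶ Y'), IsRetractOf f g → Fib g → Fib f
  Cof_retract : ∀ {X Y X' Y' : C} (f : X ⟶ Y) (g : X' ⟶ Y'), IsRetractOf f g → Cof g → Cof f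
  /-- lifting axiom: cofibrations have the left lifting property against trivial
  fibrations and trivial cofibrations against fibrations -/
  lifting : ∀ {A B X Y : C} (i : A ⟶ B) (p : X ⟶ Y), Cof i → Fib p → (W i ∨ W p) →
    ∀ (f : A ⟶ X) (g : B ⟶ Y), f ≫ p = i ≫ g → ∃ h : B ⟶ X, i ≫ h = f ∧ h ≫ p = g
  /-- factorization as a trivial cofibration followed by a fibration -/
  factorization_trivCof_fib : ∀ {X Y : C} (f : X ⟶ Y), ∃ (Z : C) (i : X ⟶ Z) (p : Z ⟶ Y),
    Cof i ∧ W i ∧ Fib p ∧ i ≫ p = f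
  /-- factorization as a cofibration followed by a trivial fibration -/
  factorization_cof_trivFib : ∀ {X Y : C} (f : X ⟶ Y), ∃ (Z : C) (i : X ⟶ Z) (p : Z ⟶ Y),
    Cof i ∧ Fib p ∧ W p ∧ i ≫ p = f

namespace ModelStructure

variable {C : Type u} [Category.{v} C]

/-- An object `X` is cofibrant if `∅ ⟶ X` is a cofibration. -/
def Cofibrant [HasColimits C] (M : ModelStructure C) (X : C) : Prop :=
  M.Cof (initial.to X)

/-- An object `X` is fibrant if `X ⟶ *` is a fibration. -/
def Fibrant [HasLimits C] (M : ModelStructure C) (X : C) : Prop :=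
  M.Fib (terminal.from X)

/-- Two morphisms `f g : X ⟶ Y` are homotopic if there is a cylinder-like object `CX`
with `i j : X ⟶ CX`, a trivial fibration `p : CX ⟶ X` with `i ≫ p = j ≫ p = 𝟙 X`, such that
the induced morphism `X ⨿ X ⟶ CX` is a cofibration, together with `h : CX ⟶ Y` with
`i ≫ h = f` and `j ≫ h = g`. -/
def Homotopic [HasColimits C] (M : ModelStructure C) {X Y : C} (f g : X ⟶ Y) : Prop :=
  ∃ (CX : C) (i j : X ⟶ CX) (p : CX ⟶ X) (h : CX ⟶ Y),
    M.Fib p ∧ M.W p ∧ i ≫ p = 𝟙 X ∧ j ≫ p = 𝟙 X ∧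
    M.Cof (coprod.desc i j) ∧ i ≫ h = f ∧ j ≫ h = g

end ModelStructure

open HomotopicalAlgebra

/-- A model structure in the sense of `ModelStructure` gives a Mathlib model category. -/
@[reducible] def ModelStructure.toModelCategory {C : Type u} [Category.{v} C]
    [HasLimits C] [HasColimits C] (M : ModelStructure C) : ModelCategory C :=
  letI i1 : CategoryWithFibrations C := ⟨M.Fib⟩
  letI i2 : CategoryWithCofibrations C := ⟨M.Cof⟩
  letI i3 : CategoryWithWeakEquivalences C := ⟨M.W⟩
  { categoryWithFibrations := i1
    categoryWithCofibrations := i2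
    categoryWithWeakEquivalences := i3
    cm1a := inferInstance
    cm1b := inferInstance
    cm2 :=
      { comp_mem := fun f g hf hg => M.W_comp f g hf hg
        of_postcomp := fun f g hg hfg => M.W_of_comp_right f g hfg hg
        of_precomp := fun f g hf hfg => M.W_of_comp_left f g hfg hf }
    cm3a := ⟨fun {X Y Z W f g} h hg => M.W_retract f g
      ⟨h.i.left, h.r.left, h.i.right, h.r.right, h.retract_left, h.retract_right,
        h.i_w, h.r_w.symm⟩ hg⟩
    cm3b := ⟨fun {X Y Z W f g} h hg => M.Fib_retract f g
      ⟨h.i.left, h.r.left, h.i.right, h.r.right, h.retract_left, h.retract_right,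
        h.i_w, h.r_w.symm⟩ hg⟩
    cm3c := ⟨fun {X Y Z W f g} h hg => M.Cof_retract f g
      ⟨h.i.left, h.r.left, h.i.right, h.r.right, h.retract_left, h.retract_right,
        h.i_w, h.r_w.symm⟩ hg⟩
    cm4a := fun {A B X Y} i p h1 h2 h3 => ⟨fun {f g} sq => by
      obtain ⟨l, hl1, hl2⟩ := M.lifting i p h1.mem h3.mem (Or.inl h2.mem) f g sq.w
      exact ⟨⟨⟨l, hl1, hl2⟩⟩⟩⟩
    cm4b := fun {A B X Y} i p h1 h2 h3 => ⟨fun {f g} sq => by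
      obtain ⟨l, hl1, hl2⟩ := M.lifting i p h1.mem h2.mem (Or.inr h3.mem) f g sq.w
      exact ⟨⟨⟨l, hl1, hl2⟩⟩⟩⟩
    cm5a := ⟨fun f => by
      obtain ⟨Z, i, p, h1, h2, h3, h4⟩ := M.factorization_trivCof_fib f
      exact ⟨⟨Z, i, p, h4, ⟨h1, h2⟩, h3⟩⟩⟩
    cm5b := ⟨fun f => by
      obtain ⟨Z, i, p, h1, h2, h3, h4⟩ := M.factorization_cof_trivFib f
      exact ⟨⟨Z, i, p, h4, h1, ⟨h2, h3⟩⟩⟩⟩ }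

/-- Right Kan extensions from left Kan extensions in the opposite categories. -/
lemma isRightKanExtension_of_op {C D H : Type*} [Category* C] [Category* D] [Category* H]
    {L : C ⥤ D} {F : C ⥤ H} (G : D ⥤ H) (α : L ⋙ G ⟶ F)
    (h : G.op.IsLeftKanExtension (L := L.op) (F := F.op) (NatTrans.op α)) :
    G.IsRightKanExtension α := by
  refine ⟨⟨IsTerminal.ofUniqueHom (fun E => CostructuredArrow.homMk
    (NatTrans.removeOp (F := G) (G := E.left) (G.op.descOfIsLeftKanExtension (L := L.op) (F := F.op)
      (NatTrans.op α) E.left.op (NatTrans.op E.hom))) ?_) ?_⟩⟩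
  · ext X
    exact congrArg Quiver.Hom.unop (G.op.descOfIsLeftKanExtension_fac_app (L := L.op) (F := F.op)
      (NatTrans.op α) E.left.op (NatTrans.op E.hom) (Opposite.op X))
  · intro E m
    have key : NatTrans.op m.left = G.op.descOfIsLeftKanExtension (L := L.op) (F := F.op)
      (NatTrans.op α) E.left.op (NatTrans.op E.hom) := by
      apply G.op.hom_ext_of_isLeftKanExtension (L := L.op) (F := F.op) (NatTrans.op α)
      refine Eq.trans ?_ (G.op.descOfIsLeftKanExtension_fac (L := L.op) (F := F.op)
        (NatTrans.op α) E.left.op (NatTrans.op E.hom)).symm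
      ext X
      have := NatTrans.congr_app (CostructuredArrow.w m) X.unop
      exact congrArg Quiver.Hom.op this
    apply CostructuredArrow.hom_ext
    ext X
    exact congrArg Quiver.Hom.unop (NatTrans.congr_app key (Opposite.op X))

lemma derives_right_absolute {C₁ C₂ H D₂ : Type*} [Category* C₁] [Category* C₂] [Category* H]
    [Category* D₂] {W₁ : MorphismProperty C₁} {W₂ : MorphismProperty C₂}
    (Φ : LocalizerMorphism W₁ W₂) [Φ.IsRightDerivabilityStructure] (F : C₂ ⥤ H)
    (h : Φ.Derives F) (L : C₂ ⥤ D₂) [L.IsLocalization W₂] :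
    ∃ (RF : D₂ ⥤ H) (α : F ⟶ L ⋙ RF), ∀ X, IsIso (α.app (Φ.functor.obj X)) := by
  have := h.hasPointwiseRightDerivedFunctor
  exact ⟨F.totalRightDerived L W₂, F.totalRightDerivedUnit L W₂,
    fun X => h.isIso_of_isRightDerivedFunctor (F.totalRightDerivedUnit L W₂) X⟩

lemma derives_op {C₁ C₂ H : Type*} [Category* C₁] [Category* C₂] [Category* H]
    {W₁ : MorphismProperty C₁} {W₂ : MorphismProperty C₂}
    {Φ : LocalizerMorphism W₁ W₂} {F : C₂ ⥤ H} (h : Φ.Derives F) : Φ.op.Derives F.op := by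
  intro X Y f hf
  have := h f.unop hf
  change IsIso ((Φ.functor ⋙ F).map f.unop).op
  infer_instance

lemma derives_left {C₁ C₂ H D₂ : Type*} [Category* C₁] [Category* C₂] [Category* H]
    [Category* D₂] {W₁ : MorphismProperty C₁} {W₂ : MorphismProperty C₂}
    (Φ : LocalizerMorphism W₁ W₂) [Φ.IsLeftDerivabilityStructure] (F : C₂ ⥤ H)
    (h : Φ.Derives F) (L : C₂ ⥤ D₂) [L.IsLocalization W₂] :
    ∃ (LF : D₂ ⥤ H) (α : L ⋙ LF ⟶ F), ∀ X, IsIso (α.app (Φ.functor.obj X)) := by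
  obtain ⟨R, β, hβ⟩ := derives_right_absolute Φ.op F.op (derives_op h) L.op
  refine ⟨R.unop, NatTrans.removeOp (F := F) (G := L ⋙ R.unop) β, fun X => ?_⟩
  have := hβ (Opposite.op X)
  change IsIso (β.app (Opposite.op (Φ.functor.obj X))).unop
  have : IsIso (β.app (Opposite.op (Φ.functor.obj X))) := this
  infer_instance

lemma isLeftDerivedFunctor_of_isIso {C₁ C₂ H D₂ : Type*} [Category* C₁] [Category* C₂]
    [Category* H] [Category* D₂] {W₁ : MorphismProperty C₁} {W₂ : MorphismProperty C₂}
    (Φ : LocalizerMorphism W₁ W₂) [Φ.IsLeftDerivabilityStructure] {F : C₂ ⥤ H}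
    (h : Φ.Derives F) {L : C₂ ⥤ D₂} [L.IsLocalization W₂]
    {LF : D₂ ⥤ H} (α : L ⋙ LF ⟶ F) (hα : ∀ X, IsIso (α.app (Φ.functor.obj X))) :
    LF.IsLeftDerivedFunctor α W₂ := by
  constructor
  apply isRightKanExtension_of_op
  have := (derives_op h).isRightDerivedFunctor_of_isIso (L₂ := L.op) (RF := LF.op)
    (NatTrans.op α) (fun X => by
      have := hα X.unop
      change IsIso (α.app (Φ.functor.obj X.unop)).op
      infer_instance)
  exact Functor.IsRightDerivedFunctor.isLeftKanExtension (L := L.op) LF.op (NatTrans.op α) W₂.op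

lemma derives_comp {C₁ C₂ H H' : Type*} [Category* C₁] [Category* C₂] [Category* H] [Category* H']
    {W₁ : MorphismProperty C₁} {W₂ : MorphismProperty C₂}
    {Φ : LocalizerMorphism W₁ W₂} {F : C₂ ⥤ H} (h : Φ.Derives F) (K : H ⥤ H') :
    Φ.Derives (F ⋙ K) := by
  intro X Y f hf
  have := h f hf
  change IsIso (K.map ((Φ.functor ⋙ F).map f))
  infer_instance

section Quillen

variable {C : Type u} [Category.{v} C] {D : Type u'} [Category.{v'} D]
  [ModelCategory C] [ModelCategory D]

lemma brown_left (g : C ⥤ D)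
    (ht : ∀ {X Y : C} (i : X ⟶ Y), Cofibration i → WeakEquivalence i →
      WeakEquivalence (g.map i))
    {X Y : C} [IsCofibrant X] [IsCofibrant Y] (w : X ⟶ Y) [WeakEquivalence w] :
    WeakEquivalence (g.map w) := by
  obtain ⟨b⟩ : Nonempty (CofibrantBrownFactorization w) := inferInstance
  have h1 : Cofibration b.i := by rw [cofibration_iff]; exact b.hi
  have h2 : WeakEquivalence (g.map b.i) := ht b.i inferInstance inferInstance
  have h3 : WeakEquivalence (g.map b.s) := ht b.s inferInstance inferInstance
  have h4 : g.map b.s ≫ g.map b.p = 𝟙 _ := by rw [← g.map_comp, b.s_p, g.map_id]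
  have h5 : WeakEquivalence (g.map b.p) := weakEquivalence_of_precomp_of_fac h4
  rw [← b.fac, g.map_comp]
  infer_instance

lemma brown_right (f : D ⥤ C)
    (ht : ∀ {X Y : D} (p : X ⟶ Y), Fibration p → WeakEquivalence p →
      WeakEquivalence (f.map p))
    {X Y : D} [IsFibrant X] [IsFibrant Y] (w : X ⟶ Y) [WeakEquivalence w] :
    WeakEquivalence (f.map w) := by
  obtain ⟨b⟩ : Nonempty (FibrantBrownFactorization w) := inferInstance
  have h1 : Fibration b.p := by rw [fibration_iff]; exact b.hp
  have h2 : WeakEquivalence (f.map b.p) := ht b.p inferInstance inferInstance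
  have h3 : WeakEquivalence (f.map b.r) := ht b.r inferInstance inferInstance
  have h4 : f.map b.i ≫ f.map b.r = 𝟙 _ := by rw [← f.map_comp, b.i_r, f.map_id]
  have h5 : WeakEquivalence (f.map b.i) := weakEquivalence_of_postcomp_of_fac h4
  rw [← b.fac, f.map_comp]
  infer_instance

theorem quillen_derived (g : C ⥤ D) (f : D ⥤ C) (adj : g ⊣ f)
    (hcof : ∀ {X Y : C} (i : X ⟶ Y), Cofibration i → Cofibration (g.map i))
    (ht : ∀ {X Y : C} (i : X ⟶ Y), Cofibration i → WeakEquivalence i →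
      WeakEquivalence (g.map i)) :
    ∃ (Lg : (weakEquivalences C).Localization ⥤ (weakEquivalences D).Localization)
      (Rf : (weakEquivalences D).Localization ⥤ (weakEquivalences C).Localization) (_ : Lg ⊣ Rf),
      (∀ X : C, IsCofibrant X → Nonempty (Lg.obj ((weakEquivalences C).Q.obj X) ≅
        (weakEquivalences D).Q.obj (g.obj X))) ∧
      (∀ Y : D, IsFibrant Y → Nonempty (Rf.obj ((weakEquivalences D).Q.obj Y) ≅
        (weakEquivalences C).Q.obj (f.obj Y))) := by
  have htf : ∀ {X Y : D} (p : X ⟶ Y), Fibration p → WeakEquivalence p →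
      WeakEquivalence (f.map p) := by
    intro X Y p h1 h2
    have : trivialFibrations C (f.map p) := by
      rw [← cofibrations_rlp]
      intro A B i hi
      rw [← cofibration_iff] at hi
      have := hcof i hi
      rw [← adj.hasLiftingProperty_iff]
      infer_instance
    exact ((mem_trivialFibrations_iff _).1 this).2
  have dg : (CofibrantObject.localizerMorphism C).Derives (g ⋙ (weakEquivalences D).Q) := by
    intro X Y w hw
    have : WeakEquivalence w.hom := (weakEquivalence_iff _).2 hw
    have := brown_left g ht w.hom
    exact Localization.inverts (weakEquivalences D).Q (weakEquivalences D) _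
      (mem_weakEquivalences (g.map w.hom))
  have df : (FibrantObject.localizerMorphism D).Derives (f ⋙ (weakEquivalences C).Q) := by
    intro X Y w hw
    have : WeakEquivalence w.hom := (weakEquivalence_iff _).2 hw
    have := brown_right f htf w.hom
    exact Localization.inverts (weakEquivalences C).Q (weakEquivalences C) _
      (mem_weakEquivalences (f.map w.hom))
  obtain ⟨Lg, α, hα⟩ := derives_left _ _ dg (weakEquivalences C).Q
  obtain ⟨Rf, β, hβ⟩ := derives_right_absolute _ _ df (weakEquivalences D).Q
  have i1 := isLeftDerivedFunctor_of_isIso _ dg α hα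
  have i2 := df.isRightDerivedFunctor_of_isIso β hβ
  have i3 : (Lg ⋙ Rf).IsLeftDerivedFunctor
      ((Functor.associator _ _ _).inv ≫ Functor.whiskerRight α Rf) (weakEquivalences C) :=
    isLeftDerivedFunctor_of_isIso _ (derives_comp dg Rf) _ (fun X => by
      have := hα X
      rw [NatTrans.comp_app]
      change IsIso (𝟙 _ ≫ Rf.map (α.app _))
      infer_instance)
  have i4 : (Rf ⋙ Lg).IsRightDerivedFunctor
      (Functor.whiskerRight β Lg ≫ (Functor.associator _ _ _).hom) (weakEquivalences D) :=
    (derives_comp df Lg).isRightDerivedFunctor_of_isIso _ (fun X => by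
      have := hβ X
      rw [NatTrans.comp_app]
      change IsIso (Lg.map (β.app _) ≫ 𝟙 _)
      infer_instance)
  refine ⟨Lg, Rf, adj.derived (weakEquivalences C) (weakEquivalences D) α β, ?_, ?_⟩
  · intro X hX
    have : IsIso (α.app X) := hα (CofibrantObject.mk X)
    exact ⟨asIso (α.app X)⟩
  · intro Y hY
    have : IsIso (β.app Y) := hβ (FibrantObject.mk Y)
    exact ⟨(asIso (β.app Y)).symm⟩

end Quillen

/-- Let `C` and `D` be model categories and `g : C ⥤ D` left adjoint to
`f : D ⥤ C`, forming a Quillen adjunction (`g` preserves cofibrations and trivial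
cofibrations). Then there is an adjunction `Lg ⊣ Rf` between the homotopy categories,
with `Lg(l_C(X)) ≅ l_D(g(X))` for every cofibrant `X` and `Rf(l_D(Y)) ≅ l_C(f(Y))` for
every fibrant `Y`. -/
theorem statement5 {C : Type u} [Category.{v} C] {D : Type u'} [Category.{v'} D]
    [HasLimits C] [HasColimits C] [HasLimits D] [HasColimits D]
    (M : ModelStructure C) (N : ModelStructure D)
    (g : C ⥤ D) (f : D ⥤ C) (adj : g ⊣ f)
    (hcof : ∀ {X Y : C} (i : X ⟶ Y), M.Cof i → N.Cof (g.map i))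
    (htrivcof : ∀ {X Y : C} (i : X ⟶ Y), M.Cof i → M.W i → N.Cof (g.map i) ∧ N.W (g.map i)) :
    ∃ (Lg : M.W.Localization ⥤ N.W.Localization)
      (Rf : N.W.Localization ⥤ M.W.Localization) (_ : Lg ⊣ Rf),
      (∀ X : C, M.Cofibrant X → Nonempty (Lg.obj (M.W.Q.obj X) ≅ N.W.Q.obj (g.obj X))) ∧
      (∀ Y : D, N.Fibrant Y → Nonempty (Rf.obj (N.W.Q.obj Y) ≅ M.W.Q.obj (f.obj Y))) := by
  let _ := M.toModelCategory
  let _ := N.toModelCategory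
  obtain ⟨Lg, Rf, a, h1, h2⟩ := quillen_derived g f adj
    (fun i hi => ⟨hcof i hi.mem⟩) (fun i hi hw => ⟨(htrivcof i hi.mem hw.mem).2⟩)
  exact ⟨Lg, Rf, a, fun X hX => h1 X ⟨hX⟩, fun Y hY => h2 Y ⟨hY⟩⟩
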